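/- Let (R, m) be a regular local ring of dimension n containing a field, and let p ⊆ q be prime ideals of R with ht_R(p) = n − 2 and ht_R(q) = n − 1. Then H_{pR_q}^{n−2}(R_q) is not an injective R_q-module; equivalently, μ^1(q, H_p^{n−2}(R)) ≠ 0. -/

import Mathlib

open CategoryTheory Opposite

noncomputable section

/-- Krull dimension of the support of a module. -/
def moduleSuppDim (R : Type) [CommRing R] (M : Type) [AddCommGroup M] [Module R M] :
    WithBot ℕ∞ :=
  Order.krullDim (Module.support R M)

/-- `M` has injective dimension at most `n` (as `R`-module), characterized by
vanishing of `Ext^i(N, M)` for all `i > n`. -/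
def injDimLE (R : Type) [CommRing R] (M : Type) [AddCommGroup M] [Module R M] (n : ℕ) : Prop :=
  ∀ (N : ModuleCat R) (i : ℕ), n < i →
    Subsingleton (((Ext R (ModuleCat R) i).obj (op N)).obj (ModuleCat.of R M))

/-- The injective dimension of `M` as an `R`-module, valued in `ℕ∞`. -/
def injDim (R : Type) [CommRing R] (M : Type) [AddCommGroup M] [Module R M] : ℕ∞ :=
  sInf {n : ℕ∞ | ∃ m : ℕ, (m : ℕ∞) = n ∧ injDimLE R M m}

/-- The height of an ideal: the infimum of the heights of primes containing it. -/
def idealHeight (R : Type) [CommRing R] (I : Ideal R) : ℕ∞ :=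
  sInf {h : ℕ∞ | ∃ p : PrimeSpectrum R, I ≤ p.asIdeal ∧ Order.height p = h}

/-- A regular local ring: a Noetherian local ring whose maximal ideal can be generated
by `dim R` elements. -/
def IsRegularLocal (R : Type) [CommRing R] [IsLocalRing R] : Prop :=
  IsNoetherianRing R ∧
    ∃ s : Finset R, Ideal.span (s : Set R) = IsLocalRing.maximalIdeal R ∧
      (s.card : WithBot ℕ∞) = ringKrullDim R

/-- A ring contains a field if some subring of it is a field. -/
def ContainsField (R : Type) [CommRing R] : Prop :=
  ∃ k : Subring R, IsField k

/-- The underlying module of the `i`-th local cohomology of `R` with support in `I`. -/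
abbrev LocalCohomologyMod (R : Type) [CommRing R] (I : Ideal R) (i : ℕ) : Type :=
  (localCohomology I i).obj (ModuleCat.of R R)

/-- The `j`-th Bass number `μ^j(p, M) = dim_{κ(p)} Ext^j_{R_p}(κ(p), M_p)` is nonzero,
expressed as nontriviality of the `Ext` module. -/
def BassNumberNonzero (R : Type) [CommRing R] (p : Ideal R) [p.IsPrime]
    (M : Type) [AddCommGroup M] [Module R M] (j : ℕ) : Prop :=
  Nontrivial
    (((Ext (Localization.AtPrime p) (ModuleCat (Localization.AtPrime p)) j).obj
        (op (ModuleCat.of (Localization.AtPrime p)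
          (IsLocalRing.ResidueField (Localization.AtPrime p))))).obj
      (ModuleCat.of (Localization.AtPrime p) (LocalizedModule p.primeCompl M)))

end

/-! The idea: let `d = ht p`. Since a regular local ring is Cohen–Macaulay, `p` contains a regular
sequence `x₁, …, x_d`, and `p` is a minimal prime, hence an associated prime, of `R ⧸ (x₁, …, x_d)`.
A regular sequence of length `d` in `p` makes the maps `Ext^d(R ⧸ p^t, R) → H_p^d(R) = H` injective.
Consequently the `p`-torsion of `H` is the image of `Ext^d(R ⧸ p, R)`, so it is finitely generated,
and `p` is an associated prime of `H`.

Now pass to `A = R_q`, where only the maximal ideal lies strictly above `pA`. Suppose that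
`Ext^1(κ(q), H_q) = 0` and choose a nonunit `x ∉ pA`. As `A ⧸ (pA + xA)` has a finite filtration
with factors `κ(q)`, also `Ext^1(A ⧸ (pA + xA), H_q) = 0`, so `x` acts surjectively on
`Hom(A ⧸ pA, H_q)`, the `pA`-torsion of `H_q`. This module is finitely generated, so it vanishes by
Nakayama's lemma, contradicting that `pA` is an associated prime of `H_q`. -/

open Limits Pointwise RingTheory.Sequence

universe w v u

noncomputable section ExtComparison

lemma homologyUnop_inv_naturality {V : Type*} [Category V] [Abelian V] {ι : Type*}
    {c : ComplexShape ι} {K L : HomologicalComplex Vᵒᵖ c} (φ : K ⟶ L) (i : ι) :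
    (L.homologyUnop i).inv ≫
        HomologicalComplex.homologyMap ((HomologicalComplex.unopFunctor V c).map φ.op) i =
      (HomologicalComplex.homologyMap φ i).unop ≫ (K.homologyUnop i).inv := by
  have hom_naturality := congrArg Quiver.Hom.unop (HomologicalComplex.homologyOp_hom_naturality
    ((HomologicalComplex.unopFunctor V c).map φ.op) i)
  exact (CommSq.mk hom_naturality.symm).vert_inv.w.symm

variable {R : Type*} [Ring R] {C : Type u} [Category.{v} C] [Abelian C] [Linear R C]

variable (R) in
/-- Precomposition with a chain map `φ : K ⟶ L`, as a map of cochain complexes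
`Hom(L, Y) ⟶ Hom(K, Y)`. It computes the functoriality of `Ext` in its first argument. -/
def linearYonedaObjMap {K L : ChainComplex C ℕ} (φ : K ⟶ L) (Y : C) :
    L.linearYonedaObj R Y ⟶ K.linearYonedaObj R Y :=
  (HomologicalComplex.unopFunctor _ _).map
    ((((linearYoneda R C).obj Y).rightOp.mapHomologicalComplex (ComplexShape.down ℕ)).map φ).op

lemma isoExt_hom_naturality [EnoughProjectives C] {X X' : C} (P : ProjectiveResolution X)
    (P' : ProjectiveResolution X') (f : X ⟶ X') (φ : P.complex ⟶ P'.complex)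
    (comm : φ.f 0 ≫ P'.π.f 0 = P.π.f 0 ≫ f) (Y : C) (n : ℕ) :
    ((Ext R C n).map f.op).app Y ≫ (P.isoExt (R := R) n Y).hom =
      (P'.isoExt (R := R) n Y).hom ≫
        HomologicalComplex.homologyMap (linearYonedaObjMap R φ Y) n := by
  let F := ((linearYoneda R C).obj Y).rightOp
  have derived := congrArg Quiver.Hom.unop
    (ProjectiveResolution.isoLeftDerivedObj_inv_naturality f P P' φ comm F n)
  have homology :=
    homologyUnop_inv_naturality ((F.mapHomologicalComplex (ComplexShape.down ℕ)).map φ) n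
  exact ((CommSq.mk derived.symm).horiz_comp (CommSq.mk homology)).w.symm

lemma homologyπ_eq_zero_iff (K : CochainComplex (ModuleCat.{v} R) ℕ) (n : ℕ) (z : K.cycles n) :
    (K.homologyπ n).hom z = 0 ↔
      ∃ y, (K.d ((ComplexShape.up ℕ).prev n) n).hom y = (K.iCycles n).hom z := by
  have exact : (ShortComplex.mk _ _ (K.toCycles_comp_homologyπ
      ((ComplexShape.up ℕ).prev n) n)).Exact :=
    ShortComplex.exact_of_g_is_cokernel _ (K.homologyIsCokernel _ n rfl)
  have iCycles_injective := (ModuleCat.mono_iff_injective (K.iCycles n)).1 inferInstance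
  have range_eq_ker := (ShortComplex.ShortExact.moduleCat_exact_iff_function_exact _).1 exact z
  refine range_eq_ker.trans (exists_congr fun y ↦ ?_)
  rw [← iCycles_injective.eq_iff, ← K.toCycles_i]
  rfl

variable {X X' : C} (P : ProjectiveResolution X) (P' : ProjectiveResolution X') (Y : C) (n : ℕ)

variable (R) in
/-- The morphism underlying a cycle of the complex `Hom(P, Y)`. -/
def underlyingHom (z : (P.complex.linearYonedaObj R Y).cycles n) : P.complex.X n ⟶ Y :=
  ((P.complex.linearYonedaObj R Y).iCycles n).hom z

variable (R) in
lemma d_comp_underlyingHom (z : (P.complex.linearYonedaObj R Y).cycles n) :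
    P.complex.d (n + 1) n ≫ underlyingHom R P Y n z = 0 :=
  congrArg (fun f ↦ f.hom z) ((P.complex.linearYonedaObj R Y).iCycles_d n (n + 1))

variable [HasExt.{w} C]

lemma smul_extMk (r : R) {n m : ℕ} (hm : n + 1 = m) (f : P.complex.X n ⟶ Y)
    (hf : P.complex.d m n ≫ f = 0) :
    r • P.extMk f m hm hf = P.extMk (r • f) m hm (by simp [hf]) := by
  rw [Abelian.Ext.smul_eq_comp_mk₀, P.extMk_comp_mk₀]
  congr 1
  simp

lemma extMk_zero_degree_eq_zero_iff (f : P.complex.X 0 ⟶ Y) (hf : P.complex.d 1 0 ≫ f = 0) :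
    P.extMk f 1 rfl hf = 0 ↔ f = 0 := by
  refine ⟨fun h ↦ ?_, by rintro rfl; simp⟩
  rw [← P.extEquivCohomologyClass.apply_eq_iff_eq, P.extEquivCohomologyClass_extMk,
    P.extEquivCohomologyClass_zero, CochainComplex.HomComplex.CohomologyClass.mk_eq_zero_iff,
    CochainComplex.HomComplex.Cocycle.toSingleMk_mem_coboundaries_iff _ _ _ _ _ 1 (by simp)] at h
  obtain ⟨g, hg⟩ := h
  have source_zero : IsZero (P.cochainComplex.X 1) :=
    P.cochainComplex.isZero_of_isStrictlyLE 0 1 (by simp)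
  rw [source_zero.eq_of_src g 0, comp_zero] at hg
  rw [← cancel_epi (P.cochainComplexXIso (-(0 : ℕ)) 0 rfl).hom, ← hg, comp_zero]

variable (R)

/-- The class in `Abelian.Ext` of a cycle of `Hom(P, Y)`, for a projective resolution `P`. -/
def cyclesToExt : (P.complex.linearYonedaObj R Y).cycles n →ₗ[R] Abelian.Ext X Y n where
  toFun z := P.extMk (underlyingHom R P Y n z) (n + 1) rfl (d_comp_underlyingHom R P Y n z)
  map_add' a b := by
    rw [P.add_extMk]
    congr 1
    exact map_add ((P.complex.linearYonedaObj R Y).iCycles n).hom a b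
  map_smul' r a := by
    rw [RingHom.id_apply, smul_extMk]
    congr 1
    exact map_smul ((P.complex.linearYonedaObj R Y).iCycles n).hom r a

lemma cyclesToExt_apply (z : (P.complex.linearYonedaObj R Y).cycles n) :
    cyclesToExt R P Y n z =
      P.extMk (underlyingHom R P Y n z) (n + 1) rfl (d_comp_underlyingHom R P Y n z) :=
  rfl

lemma cyclesToExt_surjective : Function.Surjective (cyclesToExt R P Y n) := by
  intro x
  obtain ⟨f, hf, rfl⟩ := P.extMk_surjective x (n + 1) rfl
  let K := P.complex.linearYonedaObj R Y
  refine ⟨K.cyclesMk f (n + 1) (by simp) hf, ?_⟩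
  rw [cyclesToExt_apply]
  congr 1
  exact K.i_cyclesMk f (n + 1) (by simp) hf

lemma ker_cyclesToExt :
    LinearMap.ker (cyclesToExt R P Y n) =
      LinearMap.ker ((P.complex.linearYonedaObj R Y).homologyπ n).hom := by
  ext z
  rw [LinearMap.mem_ker, LinearMap.mem_ker, homologyπ_eq_zero_iff]
  rcases n with _ | k
  · rw [cyclesToExt_apply, extMk_zero_degree_eq_zero_iff,
      (P.complex.linearYonedaObj R Y).shape _ _ (by simp)]
    exact ⟨fun h ↦ ⟨0, h.symm⟩, fun ⟨_, h⟩ ↦ h.symm⟩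
  · rw [cyclesToExt_apply, P.extMk_eq_zero_iff _ _ _ _ k rfl, CochainComplex.prev_nat_succ]
    rfl

/-- The homology of `Hom(P, Y)` computes `Abelian.Ext`. -/
def homologyLinearEquivExt :
    (P.complex.linearYonedaObj R Y).homology n ≃ₗ[R] Abelian.Ext X Y n :=
  (LinearMap.quotKerEquivOfSurjective ((P.complex.linearYonedaObj R Y).homologyπ n).hom
      ((ModuleCat.epi_iff_surjective _).1 inferInstance)).symm ≪≫ₗ
    Submodule.quotEquivOfEq _ _ (ker_cyclesToExt R P Y n).symm ≪≫ₗ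
    LinearMap.quotKerEquivOfSurjective _ (cyclesToExt_surjective R P Y n)

lemma homologyLinearEquivExt_homologyπ (z : (P.complex.linearYonedaObj R Y).cycles n) :
    homologyLinearEquivExt R P Y n (((P.complex.linearYonedaObj R Y).homologyπ n).hom z) =
      cyclesToExt R P Y n z := by
  have symm_apply : (LinearMap.quotKerEquivOfSurjective
      ((P.complex.linearYonedaObj R Y).homologyπ n).hom
      ((ModuleCat.epi_iff_surjective _).1 inferInstance)).symm
        (((P.complex.linearYonedaObj R Y).homologyπ n).hom z) = Submodule.Quotient.mk z := by
    rw [LinearEquiv.symm_apply_eq]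
    rfl
  simp only [homologyLinearEquivExt, LinearEquiv.trans_apply, symm_apply]
  rfl

variable {P P'}

lemma homologyLinearEquivExt_homologyMap (f : X ⟶ X') (φ : P.complex ⟶ P'.complex)
    (comm : φ.f 0 ≫ P'.π.f 0 = P.π.f 0 ≫ f)
    (x : (P'.complex.linearYonedaObj R Y).homology n) :
    homologyLinearEquivExt R P Y n
        ((HomologicalComplex.homologyMap (linearYonedaObjMap R φ Y) n).hom x) =
      (Abelian.Ext.mk₀ f).comp (homologyLinearEquivExt R P' Y n x) (zero_add n) := by
  obtain ⟨z, rfl⟩ := (ModuleCat.epi_iff_surjective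
    ((P'.complex.linearYonedaObj R Y).homologyπ n)).1 inferInstance x
  let z' := (HomologicalComplex.cyclesMap (linearYonedaObjMap R φ Y) n).hom z
  have map_homologyπ : (HomologicalComplex.homologyMap (linearYonedaObjMap R φ Y) n).hom
      (((P'.complex.linearYonedaObj R Y).homologyπ n).hom z) =
      ((P.complex.linearYonedaObj R Y).homologyπ n).hom z' :=
    congrArg (fun g ↦ g.hom z)
      (HomologicalComplex.homologyπ_naturality (linearYonedaObjMap R φ Y) n)
  have underlyingHom_map : underlyingHom R P Y n z' = φ.f n ≫ underlyingHom R P' Y n z :=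
    congrArg (fun g ↦ g.hom z) (HomologicalComplex.cyclesMap_i (linearYonedaObjMap R φ Y) n)
  rw [map_homologyπ, homologyLinearEquivExt_homologyπ, homologyLinearEquivExt_homologyπ,
    cyclesToExt_apply, cyclesToExt_apply,
    ProjectiveResolution.mk₀_comp_extMk (φ := ⟨φ, by simpa using comm⟩)]
  congr 1

variable [EnoughProjectives C] (X)

/-- The comparison between the derived functor `Ext R C n` of `Hom` and `Abelian.Ext`. -/
def extLinearEquiv : ((Ext R C n).obj (op X)).obj Y ≃ₗ[R] Abelian.Ext X Y n :=
  ((projectiveResolution X).isoExt (R := R) n Y).toLinearEquiv ≪≫ₗ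
    homologyLinearEquivExt R (projectiveResolution X) Y n

variable {X}

lemma extLinearEquiv_map (f : X ⟶ X') (x : ((Ext R C n).obj (op X')).obj Y) :
    extLinearEquiv R X Y n ((((Ext R C n).map f.op).app Y).hom x) =
      (Abelian.Ext.mk₀ f).comp (extLinearEquiv R X' Y n x) (zero_add n) := by
  let P := projectiveResolution X
  let P' := projectiveResolution X'
  let φ : P.complex ⟶ P'.complex := ProjectiveResolution.lift f P P'
  have comm : φ.f 0 ≫ P'.π.f 0 = P.π.f 0 ≫ f := ProjectiveResolution.lift_commutes_zero f P P'
  have isoExt_map : (P.isoExt (R := R) n Y).hom.hom ((((Ext R C n).map f.op).app Y).hom x) =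
      (HomologicalComplex.homologyMap (linearYonedaObjMap R φ Y) n).hom
        ((P'.isoExt (R := R) n Y).hom.hom x) :=
    congrArg (fun g ↦ g.hom x) (isoExt_hom_naturality P P' f φ comm Y n)
  exact (congrArg _ isoExt_map).trans (homologyLinearEquivExt_homologyMap R Y n f φ comm _)

lemma extLinearEquiv_symm_comp (f : X ⟶ X') (u : Abelian.Ext X' Y n) :
    (extLinearEquiv R X Y n).symm ((Abelian.Ext.mk₀ f).comp u (zero_add n)) =
      (((Ext R C n).map f.op).app Y).hom ((extLinearEquiv R X' Y n).symm u) := by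
  rw [LinearEquiv.symm_apply_eq, extLinearEquiv_map, LinearEquiv.apply_symm_apply]

end ExtComparison

section ExtRegularSequence

variable {R : Type u} [CommRing R]

lemma smul_top_quotSMulTop_ne_top {M : Type*} [AddCommGroup M] [Module R M] {I : Ideal R} {r : R}
    (hr : r ∈ I) (hI : I • (⊤ : Submodule R M) ≠ ⊤) :
    I • (⊤ : Submodule R (QuotSMulTop r M)) ≠ ⊤ := by
  intro eq_top
  have comap_eq := congrArg (Submodule.comap (Submodule.mkQ (r • (⊤ : Submodule R M)))) eq_top
  have smul_le : r • (⊤ : Submodule R M) ≤ I • ⊤ := by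
    rw [← Submodule.ideal_span_singleton_smul]
    exact Submodule.smul_mono_left ((Ideal.span_singleton_le_iff_mem I).2 hr)
  rw [Submodule.comap_smul_top_of_surjective I _ (Submodule.mkQ_surjective _),
    Submodule.ker_mkQ, Submodule.comap_top, sup_eq_left.2 smul_le] at comap_eq
  exact hI comap_eq

/-- For `rs` regular on `M` this is the injective half of `Hom(X, M/rsM) ≅ Ext^d(X, M)`, obtained by
iterating the connecting map of `0 → M → M → M/rM → 0`. -/
lemma exists_injective_hom_quotient_to_ext [IsNoetherianRing R] {I : Ideal R} (X : ModuleCat.{u} R)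
    [Module.Finite R X] (hX : Module.support R X ⊆ PrimeSpectrum.zeroLocus I)
    (M : Type u) [AddCommGroup M] [Module R M] [Module.Finite R M]
    (hI : I • (⊤ : Submodule R M) ≠ ⊤) (rs : List R) (mem : ∀ r ∈ rs, r ∈ I)
    (reg : IsRegular M rs) :
    ∃ f : (X →ₗ[R] M ⧸ (Ideal.ofList rs • ⊤ : Submodule R M)) →ₗ[R]
      Abelian.Ext X (ModuleCat.of R M) rs.length, Function.Injective f := by
  induction rs generalizing M with
  | nil =>
    have quotient_equiv : (M ⧸ (Ideal.ofList ([] : List R) • ⊤ : Submodule R M)) ≃ₗ[R] M :=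
      Submodule.quotEquivOfEqBot _ (by simp)
    exact ⟨_, (quotient_equiv.congrRight (M := X) ≪≫ₗ
      (ModuleCat.homLinearEquiv (S := R) (M := X) (N := ModuleCat.of R M)).symm ≪≫ₗ
      (Abelian.Ext.linearEquiv₀ (R := R) (X := X) (Y := ModuleCat.of R M)).symm).injective⟩
  | cons a rs ih =>
    obtain ⟨a_reg, rs_reg⟩ := (isRegular_cons_iff M a rs).1 reg
    obtain ⟨f, f_injective⟩ := ih (QuotSMulTop a M)
      (smul_top_quotSMulTop_ne_top (mem a List.mem_cons_self) hI)
      (fun r hr ↦ mem r (List.mem_cons_of_mem _ hr)) rs_reg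
    have shortExact := IsSMulRegular.smulShortComplex_shortExact (M := ModuleCat.of R M) a_reg
    have ext_vanish := ModuleCat.subsingleton_ext_of_exists_isRegular I X hX (ModuleCat.of R M)
      hI.lt_top (a :: rs) mem reg rs.length (by simp)
    let δ : Abelian.Ext X (ModuleCat.of R (QuotSMulTop a M)) rs.length →ₗ[R]
        Abelian.Ext X (ModuleCat.of R M) (a :: rs).length :=
      Abelian.Ext.postcompOfLinear shortExact.extClass R X rfl
    have δ_injective : Function.Injective δ := by
      refine (injective_iff_map_eq_zero δ).2 fun x hx ↦ ?_
      obtain ⟨y, hy⟩ := Abelian.Ext.covariant_sequence_exact₃ X shortExact x rfl hx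
      rw [← hy, show y = 0 from ext_vanish.elim y 0, Abelian.Ext.zero_comp]
      rfl
    exact ⟨(δ ∘ₗ f) ∘ₗ (LinearEquiv.congrRight
        (Submodule.quotOfListConsSMulTopEquivQuotSMulTopInner M a rs)).toLinearMap,
      (δ_injective.comp f_injective).comp (LinearEquiv.injective _)⟩

lemma ext_comp_finsupp_lsum_eq_zero {ι : Type u} [Finite ι] {X M : ModuleCat.{u} R} {n : ℕ}
    (u : Abelian.Ext X M n) (a : ι → R) (hu : ∀ i, a i • u = 0) :
    (Abelian.Ext.mk₀ (ModuleCat.ofHom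
      (Finsupp.lsum R fun i ↦ a i • (LinearMap.id : X →ₗ[R] X)))).comp u (zero_add n) = 0 := by
  have := Fintype.ofFinite ι
  have decomposition : ModuleCat.ofHom (Finsupp.lsum R fun i ↦ a i • (LinearMap.id : X →ₗ[R] X)) =
      ∑ i, ModuleCat.ofHom (Finsupp.lapply i) ≫ (a i • 𝟙 X) := by
    ext : 1
    simp only [ModuleCat.hom_sum, ModuleCat.hom_ofHom]
    refine Finsupp.lhom_ext fun i x ↦ ?_
    classical
    simp [Finsupp.single_apply, apply_ite]
  rw [decomposition, ← Abelian.Ext.addEquiv₀_symm_apply, map_sum, Abelian.Ext.sum_comp]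
  refine Finset.sum_eq_zero fun i _ ↦ ?_
  rw [Abelian.Ext.addEquiv₀_symm_apply, ← Abelian.Ext.mk₀_comp_mk₀_assoc, Abelian.Ext.mk₀_smul,
    Abelian.Ext.smul_comp, Abelian.Ext.mk₀_id_comp, hu, Abelian.Ext.comp_zero]

lemma support_finsupp_subset {ι X : Type*} [Finite ι] [AddCommGroup X] [Module R X]
    [Module.Finite R X] : Module.support R (ι →₀ X) ⊆ Module.support R X := by
  rcases isEmpty_or_nonempty ι
  · rw [Module.support_eq_empty]
    exact Set.empty_subset _
  · rw [Module.support_eq_zeroLocus, Module.support_eq_zeroLocus, Module.annihilator_finsupp]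

variable [IsNoetherianRing R] {I : Ideal R} {X X' M : ModuleCat.{u} R} [Module.Finite R X]
  [Module.Finite R M] {rs : List R}

lemma ext_precomp_injective_of_epi (hX : Module.support R X ⊆ PrimeSpectrum.zeroLocus I)
    (hI : I • (⊤ : Submodule R M) ≠ ⊤) (mem : ∀ r ∈ rs, r ∈ I) (reg : IsRegular M rs)
    (g : X ⟶ X') [Epi g] :
    Function.Injective fun u : Abelian.Ext X' M rs.length ↦
      (Abelian.Ext.mk₀ g).comp u (zero_add _) := by
  rcases h : rs.length with _ | n
  · exact Abelian.Ext.precomp_mk₀_injective_of_epi M g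
  refine (injective_iff_map_eq_zero (Abelian.Ext.mk₀ g |>.precomp M (zero_add (n + 1)))).2
    fun u hu ↦ ?_
  have shortExact := LinearMap.shortExact_shortComplexKer ((ModuleCat.epi_iff_surjective g).1 ‹_›)
  obtain ⟨x, hx⟩ := Abelian.Ext.contravariant_sequence_exact₃ shortExact M u hu (add_comm 1 n)
  have := ModuleCat.subsingleton_ext_of_exists_isRegular I
    (ModuleCat.of R (LinearMap.ker g.hom))
    ((Module.support_subset_of_injective _ (LinearMap.ker g.hom).injective_subtype).trans hX) M
    hI.lt_top rs mem reg n (by omega)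
  rw [← hx, show x = 0 from this.elim x 0, Abelian.Ext.comp_zero]

/-- A class killed by `I` vanishes on `I • X`: precomposing it with a surjection `X ^ r → I • X`
given by generators of `I` yields zero, and such a precomposition is injective. -/
lemma exists_comp_eq_of_smul_eq_zero (hX : Module.support R X ⊆ PrimeSpectrum.zeroLocus I)
    (hI : I • (⊤ : Submodule R M) ≠ ⊤) (mem : ∀ r ∈ rs, r ∈ I) (reg : IsRegular M rs)
    (g : X ⟶ X') [Epi g] (ker_g : LinearMap.ker g.hom = I • ⊤)
    (u : Abelian.Ext X M rs.length) (hu : ∀ a ∈ I, a • u = 0) :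
    ∃ v, (Abelian.Ext.mk₀ g).comp v (zero_add _) = u := by
  have shortExact := LinearMap.shortExact_shortComplexKer ((ModuleCat.epi_iff_surjective g).1 ‹_›)
  refine Abelian.Ext.contravariant_sequence_exact₂ shortExact M u ?_
  obtain ⟨s, rfl⟩ := IsNoetherian.noetherian I
  let φ : ((s : Set R) →₀ X) →ₗ[R] X := Finsupp.lsum R fun i ↦ i.val • LinearMap.id
  have range_φ : LinearMap.range φ = LinearMap.ker g.hom := by
    rw [ker_g, Submodule.span_smul_eq, Submodule.smul_top_eq_range_lsum]
  let π : ModuleCat.of R ((s : Set R) →₀ X) ⟶ ModuleCat.of R (LinearMap.ker g.hom) :=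
    ModuleCat.ofHom (φ.codRestrict _ fun x ↦ range_φ ▸ LinearMap.mem_range_self φ x)
  have : Epi π := by
    rw [ModuleCat.epi_iff_surjective]
    rintro ⟨x, hx⟩
    obtain ⟨y, rfl⟩ := range_φ.symm ▸ hx
    exact ⟨y, rfl⟩
  refine ext_precomp_injective_of_epi (support_finsupp_subset.trans hX) hI mem reg π ?_
  simp only [Abelian.Ext.mk₀_comp_mk₀_assoc, Abelian.Ext.comp_zero]
  exact ext_comp_finsupp_lsum_eq_zero u _ fun i ↦ hu i (Ideal.subset_span i.2)

end ExtRegularSequence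

noncomputable section LocalCohomology

variable {R : Type u} [CommRing R] (I : Ideal R)

/-- The projection `R ⧸ I ^ s ⟶ R ⧸ I ^ t`, a transition map of the system defining
`localCohomology I`. -/
def quotientPowMap {t s : ℕ} (h : t ≤ s) :
    ModuleCat.of R (R ⧸ I ^ s) ⟶ ModuleCat.of R (R ⧸ I ^ t) :=
  ModuleCat.ofHom (Submodule.mapQ _ _ LinearMap.id (Ideal.pow_le_pow_right h))

instance epi_quotientPowMap {t s : ℕ} (h : t ≤ s) : Epi (quotientPowMap I h) := by
  rw [ModuleCat.epi_iff_surjective]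
  intro x
  obtain ⟨y, rfl⟩ := Submodule.Quotient.mk_surjective _ x
  exact ⟨Submodule.Quotient.mk y, rfl⟩

lemma ker_quotientPowMap_one {s : ℕ} (h : 1 ≤ s) :
    LinearMap.ker (quotientPowMap I h).hom = I • ⊤ := by
  rw [quotientPowMap, ModuleCat.hom_ofHom, Submodule.mapQ, Submodule.ker_liftQ, LinearMap.comp_id,
    Submodule.ker_mkQ, pow_one, ← Submodule.range_mkQ (I ^ s), LinearMap.range_eq_map,
    ← Submodule.map_smul'', smul_eq_mul, Ideal.mul_top]

variable (d : ℕ) (M : ModuleCat.{u} R)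

/-- The canonical map from `Ext ^ d (R ⧸ I ^ t, M)` to the colimit `H_I ^ d (M)`. -/
def extToLocalCohomology (t : ℕ) :
    Abelian.Ext (ModuleCat.of R (R ⧸ I ^ t)) M d →ₗ[R] (localCohomology I d).obj M :=
  ((colimit.ι (localCohomology.diagram (localCohomology.idealPowersDiagram I) d)
    (op (op t))).app M).hom ∘ₗ (extLinearEquiv R (ModuleCat.of R (R ⧸ I ^ t)) M d).symm.toLinearMap

lemma extToLocalCohomology_comp {t s : ℕ} (h : t ≤ s)
    (u : Abelian.Ext (ModuleCat.of R (R ⧸ I ^ t)) M d) :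
    extToLocalCohomology I d M s ((Abelian.Ext.mk₀ (quotientPowMap I h)).comp u (zero_add d)) =
      extToLocalCohomology I d M t u := by
  have w := colimit.w (localCohomology.diagram (localCohomology.idealPowersDiagram I) d)
    (homOfLE h).op.op
  refine (congrArg _ (extLinearEquiv_symm_comp R M d (quotientPowMap I h) u)).trans ?_
  exact congrArg (fun q ↦ (q.app M).hom ((extLinearEquiv R _ M d).symm u)) w

lemma exists_extToLocalCohomology_eq (z : (localCohomology I d).obj M) :
    ∃ t u, extToLocalCohomology I d M t u = z := by
  let D := localCohomology.diagram (localCohomology.idealPowersDiagram I) d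
  let ev := (evaluation (ModuleCat.{u} R) (ModuleCat.{u} R)).obj M
  have := preservesSmallestFilteredColimits_of_preservesFilteredColimits (forget (ModuleCat.{u} R))
  obtain ⟨⟨⟨t⟩⟩, x, hx⟩ := Concrete.isColimit_exists_rep (D ⋙ ev)
    (isColimitOfPreserves ev (colimit.isColimit D)) z
  let e := extLinearEquiv R (ModuleCat.of R (R ⧸ I ^ t)) M d
  exact ⟨t, e x, (congrArg _ (e.symm_apply_apply x)).trans hx⟩

lemma exists_comp_eq_zero_of_extToLocalCohomology_eq_zero {t : ℕ}
    (u : Abelian.Ext (ModuleCat.of R (R ⧸ I ^ t)) M d) (hu : extToLocalCohomology I d M t u = 0) :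
    ∃ s, ∃ h : t ≤ s, (Abelian.Ext.mk₀ (quotientPowMap I h)).comp u (zero_add d) = 0 := by
  let D := localCohomology.diagram (localCohomology.idealPowersDiagram I) d
  let ev := (evaluation (ModuleCat.{u} R) (ModuleCat.{u} R)).obj M
  have := preservesSmallestFilteredColimits_of_preservesFilteredColimits (forget (ModuleCat.{u} R))
  obtain ⟨⟨⟨s⟩⟩, f, g, hfg⟩ := (Concrete.isColimit_rep_eq_iff_exists (D ⋙ ev)
    (isColimitOfPreserves ev (colimit.isColimit D)) (i := op (op t)) (j := op (op t))
    ((extLinearEquiv R (ModuleCat.of R (R ⧸ I ^ t)) M d).symm u) 0).1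
      (hu.trans (map_zero ((colimit.ι D (op (op t))).app M).hom).symm)
  refine ⟨s, f.unop.unop.le, (extLinearEquiv R _ M d).symm.injective ?_⟩
  rw [map_zero, extLinearEquiv_symm_comp]
  exact hfg.trans (map_zero ((D ⋙ ev).map g).hom)

variable {d M I}

lemma support_quotient_pow_subset (t : ℕ) :
    Module.support R (R ⧸ I ^ t) ⊆ PrimeSpectrum.zeroLocus I := by
  rw [Module.support_eq_zeroLocus, Ideal.annihilator_quotient]
  exact fun P hP ↦ P.isPrime.le_of_pow_le hP

variable [IsNoetherianRing R] [Module.Finite R M] {rs : List R}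

lemma extToLocalCohomology_injective (hI : I • (⊤ : Submodule R M) ≠ ⊤) (mem : ∀ r ∈ rs, r ∈ I)
    (reg : IsRegular M rs) (t : ℕ) :
    Function.Injective (extToLocalCohomology I rs.length M t) := by
  refine (injective_iff_map_eq_zero _).2 fun u hu ↦ ?_
  obtain ⟨s, hts, comp_eq_zero⟩ := exists_comp_eq_zero_of_extToLocalCohomology_eq_zero I _ M u hu
  have precomp_injective := ext_precomp_injective_of_epi (X := ModuleCat.of R (R ⧸ I ^ s))
    (support_quotient_pow_subset s) hI mem reg (quotientPowMap I hts)
  exact precomp_injective (comp_eq_zero.trans (Abelian.Ext.comp_zero ..).symm)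

lemma torsionBySet_localCohomology_le_range (hI : I • (⊤ : Submodule R M) ≠ ⊤)
    (mem : ∀ r ∈ rs, r ∈ I) (reg : IsRegular M rs) :
    Submodule.torsionBySet R ((localCohomology I rs.length).obj M) I ≤
      LinearMap.range (extToLocalCohomology I rs.length M 1) := by
  intro z hz
  obtain ⟨t, u, rfl⟩ := exists_extToLocalCohomology_eq I _ M z
  rw [← extToLocalCohomology_comp I _ M (Nat.le_add_right t 1)] at hz ⊢
  rw [Submodule.mem_torsionBySet_iff] at hz
  obtain ⟨v, hv⟩ := exists_comp_eq_of_smul_eq_zero (X := ModuleCat.of R (R ⧸ I ^ (t + 1)))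
    (support_quotient_pow_subset _) hI mem reg (quotientPowMap I (Nat.le_add_left 1 t))
    (ker_quotientPowMap_one I _) ((Abelian.Ext.mk₀ _).comp u (zero_add _)) fun a ha ↦
      extToLocalCohomology_injective hI mem reg (t + 1) (by
        rw [map_smul, map_zero]
        exact hz ⟨a, ha⟩)
  rw [← hv, extToLocalCohomology_comp]
  exact LinearMap.mem_range_self _ v

lemma fg_torsionBySet_localCohomology (hI : I • (⊤ : Submodule R M) ≠ ⊤)
    (mem : ∀ r ∈ rs, r ∈ I) (reg : IsRegular M rs) :
    (Submodule.torsionBySet R ((localCohomology I rs.length).obj M) I).FG :=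
  have := ModuleCat.finite_ext R (ModuleCat.of R (R ⧸ I ^ 1)) M rs.length
  Submodule.FG.of_le (Module.Finite.iff_fg.1 inferInstance)
    (torsionBySet_localCohomology_le_range hI mem reg)

lemma mem_associatedPrimes_hom_quotient {N : Type*} [AddCommGroup N] [Module R N] {P : Ideal R}
    (hP : P ∈ associatedPrimes R N) (hIP : I ≤ P) : P ∈ associatedPrimes R ((R ⧸ I) →ₗ[R] N) := by
  obtain ⟨prime, x, P_eq⟩ := isAssociatedPrime_iff.1 hP
  have mem_P_iff (r : R) : r ∈ P ↔ r • x = 0 := by rw [P_eq, Submodule.mem_colon_singleton]; rfl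
  let φ : (R ⧸ I) →ₗ[R] N :=
    Submodule.liftQ I (LinearMap.toSpanSingleton R N x) fun r hr ↦ (mem_P_iff r).1 (hIP hr)
  have φ_one : φ (Submodule.Quotient.mk 1) = x := one_smul R x
  refine isAssociatedPrime_iff.2 ⟨prime, φ, Ideal.ext fun r ↦ ?_⟩
  rw [mem_P_iff, Submodule.mem_colon_singleton, Submodule.mem_bot]
  refine ⟨fun h ↦ ?_, fun h ↦ ?_⟩
  · refine Submodule.linearMap_qext _ (LinearMap.ext_ring ?_)
    exact (congrArg (r • ·) φ_one).trans h
  · rw [← φ_one]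
    exact congrArg (fun f ↦ f (Submodule.Quotient.mk 1)) h

lemma mem_associatedPrimes_localCohomology (hI : I • (⊤ : Submodule R M) ≠ ⊤)
    (mem : ∀ r ∈ rs, r ∈ I) (reg : IsRegular M rs) {P : Ideal R} (hIP : I ≤ P)
    (hP : P ∈ associatedPrimes R (M ⧸ (Ideal.ofList rs • ⊤ : Submodule R M))) :
    P ∈ associatedPrimes R ((localCohomology I rs.length).obj M) := by
  obtain ⟨f, f_injective⟩ := exists_injective_hom_quotient_to_ext (ModuleCat.of R (R ⧸ I ^ 1))
    (support_quotient_pow_subset 1) M hI rs mem reg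
  exact associatedPrimes.subset_of_injective
    (f := extToLocalCohomology I rs.length M 1 ∘ₗ f)
    ((extToLocalCohomology_injective hI mem reg 1).comp f_injective)
    (mem_associatedPrimes_hom_quotient hP ((pow_one I).trans_le hIP))

end LocalCohomology

noncomputable section BassLemma

variable {R : Type u} [CommRing R]

lemma ext_subsingleton_of_linearEquiv {M N : Type u} [AddCommGroup M] [Module R M]
    [AddCommGroup N] [Module R N] (e : M ≃ₗ[R] N) {Y : ModuleCat.{u} R} {n : ℕ}
    [Subsingleton (Abelian.Ext (ModuleCat.of R N) Y n)] :
    Subsingleton (Abelian.Ext (ModuleCat.of R M) Y n) := by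
  refine subsingleton_of_forall_eq 0 fun u ↦ ?_
  rw [← Abelian.Ext.mk₀_id_comp u, ← e.toModuleIso.hom_inv_id, ← Abelian.Ext.mk₀_comp_mk₀_assoc,
    Subsingleton.elim ((Abelian.Ext.mk₀ e.toModuleIso.inv).comp u (zero_add n)) 0,
    Abelian.Ext.comp_zero]

lemma ext_subsingleton_of_isZero {X : ModuleCat.{u} R} (hX : IsZero X) (Y : ModuleCat.{u} R)
    (n : ℕ) : Subsingleton (Abelian.Ext X Y n) := by
  refine subsingleton_of_forall_eq 0 fun u ↦ ?_
  rw [← Abelian.Ext.mk₀_id_comp u, hX.eq_of_src (𝟙 X) 0, Abelian.Ext.mk₀_zero,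
    Abelian.Ext.zero_comp]

lemma ext_subsingleton_of_quotient_prime [IsNoetherianRing R] {J : Ideal R} {Y : ModuleCat.{u} R}
    {n : ℕ} (h : ∀ Q : PrimeSpectrum R, J ≤ Q.asIdeal →
      Subsingleton (Abelian.Ext (ModuleCat.of R (R ⧸ Q.asIdeal)) Y n))
    {M : Type u} [AddCommGroup M] [Module R M] [Module.Finite R M]
    (hM : J ≤ Module.annihilator R M) : Subsingleton (Abelian.Ext (ModuleCat.of R M) Y n) := by
  induction ‹Module.Finite R M› using
    IsNoetherianRing.induction_on_isQuotientEquivQuotientPrime R with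
  | subsingleton N => exact ext_subsingleton_of_isZero (ModuleCat.isZero_of_subsingleton _) Y n
  | quotient N Q e =>
    rw [e.annihilator_eq, Ideal.annihilator_quotient] at hM
    have := h Q hM
    exact ext_subsingleton_of_linearEquiv e
  | exact N₁ N₂ N₃ f g hf hg hfg ih₁ ih₃ =>
    have vanish₁ := ih₁ (hM.trans (f.annihilator_le_of_injective hf))
    have vanish₃ := ih₃ (hM.trans (g.annihilator_le_of_surjective hg))
    have hS := ModuleCat.shortComplex_shortExact
      (ModuleCat.shortComplexOfCompEqZero f g hfg.linearMap_comp_eq_zero) hfg hf hg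
    refine subsingleton_of_forall_eq 0 fun u ↦ ?_
    obtain ⟨v, rfl⟩ := Abelian.Ext.contravariant_sequence_exact₂ hS Y u (vanish₁.elim _ _)
    rw [vanish₃.elim v 0, Abelian.Ext.comp_zero]

lemma smul_id_comp_ext (x : R) {X Y : ModuleCat.{u} R} {i : ℕ} (v : Abelian.Ext X Y i) :
    (Abelian.Ext.mk₀ (x • 𝟙 X)).comp v (zero_add i) = x • v := by
  rw [Abelian.Ext.mk₀_smul, Abelian.Ext.smul_comp, Abelian.Ext.mk₀_id_comp]

lemma exists_smul_eq_of_subsingleton_ext_quotSMulTop {M Y : ModuleCat.{u} R} {x : R}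
    (hx : IsSMulRegular M x) {i : ℕ}
    [Subsingleton (Abelian.Ext (ModuleCat.of R (QuotSMulTop x M)) Y (i + 1))]
    (u : Abelian.Ext M Y i) : ∃ v : Abelian.Ext M Y i, x • v = u := by
  obtain ⟨v, hv⟩ := Abelian.Ext.contravariant_sequence_exact₁ hx.smulShortComplex_shortExact Y u
    (add_comm 1 i) (Subsingleton.elim (α := Abelian.Ext (ModuleCat.of R (QuotSMulTop x M)) Y _) _ _)
  refine ⟨v, .trans ?_ hv⟩
  exact (smul_id_comp_ext x v).symm

lemma le_annihilator_quotSMulTop_quotient (I : Ideal R) (x : R) :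
    I ⊔ Ideal.span {x} ≤ Module.annihilator R (QuotSMulTop x (R ⧸ I)) := by
  refine sup_le ?_ ((Ideal.span_singleton_le_iff_mem _).2 (QuotSMulTop.mem_annihilator _ x))
  exact Ideal.annihilator_quotient.ge.trans
    (LinearMap.annihilator_le_of_surjective (Submodule.mkQ _) (Submodule.mkQ_surjective _))

lemma isSMulRegular_quotient_of_notMem {P : Ideal R} [P.IsPrime] {x : R} (hx : x ∉ P) :
    IsSMulRegular (R ⧸ P) x :=
  (isSMulRegular_quotient_iff_mem_of_smul_mem P x).2
    fun _ h ↦ (Ideal.IsPrime.mem_or_mem ‹_› h).resolve_left hx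

variable (R) in
/-- The identification of `Ext ^ 0 (M, N)` with `Hom (M, N)`. -/
def extZeroLinearEquiv (M N : Type u) [AddCommGroup M] [Module R M] [AddCommGroup N]
    [Module R N] : Abelian.Ext (ModuleCat.of R M) (ModuleCat.of R N) 0 ≃ₗ[R] (M →ₗ[R] N) :=
  Abelian.Ext.linearEquiv₀.trans ModuleCat.homLinearEquiv

lemma finite_ext_zero_quotient [IsNoetherianRing R] {I : Ideal R} {H : Type u} [AddCommGroup H]
    [Module R H] (fg : (Submodule.torsionBySet R H I).FG) :
    Module.Finite R (Abelian.Ext (ModuleCat.of R (R ⧸ I)) (ModuleCat.of R H) 0) := by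
  have := Module.Finite.of_fg fg
  let evalOne : ((R ⧸ I) →ₗ[R] H) →ₗ[R] Submodule.torsionBySet R H I :=
    (LinearMap.applyₗ (Submodule.Quotient.mk 1)).codRestrict _ fun f ↦
      (Submodule.mem_torsionBySet_iff _ _).2 fun a ↦ by
        rw [LinearMap.applyₗ_apply_apply, ← map_smul, ← Submodule.Quotient.mk_smul,
          (Submodule.Quotient.mk_eq_zero I).2 (by simp), map_zero]
  have evalOne_injective : Function.Injective evalOne := fun f g h ↦
    Submodule.linearMap_qext _ (LinearMap.ext_ring (congrArg Subtype.val h))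
  have := Module.Finite.of_injective evalOne evalOne_injective
  exact Module.Finite.equiv (extZeroLinearEquiv R (R ⧸ I) H).symm

variable [IsLocalRing R] [IsNoetherianRing R]

lemma ext_quotient_prime_subsingleton_of_forall_lt {Y : ModuleCat.{u} R} {P : PrimeSpectrum R}
    (hP : P.asIdeal ≠ IsLocalRing.maximalIdeal R) {i : ℕ}
    [Module.Finite R (Abelian.Ext (ModuleCat.of R (R ⧸ P.asIdeal)) Y i)]
    (h : ∀ Q : PrimeSpectrum R, P < Q →
      Subsingleton (Abelian.Ext (ModuleCat.of R (R ⧸ Q.asIdeal)) Y (i + 1))) :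
    Subsingleton (Abelian.Ext (ModuleCat.of R (R ⧸ P.asIdeal)) Y i) := by
  obtain ⟨x, hxm, hxP⟩ := SetLike.exists_of_lt
    ((IsLocalRing.le_maximalIdeal P.isPrime.ne_top).lt_of_ne hP)
  have reg : IsSMulRegular (ModuleCat.of R (R ⧸ P.asIdeal)) x :=
    isSMulRegular_quotient_of_notMem hxP
  have vanish : Subsingleton
      (Abelian.Ext (ModuleCat.of R (QuotSMulTop x (R ⧸ P.asIdeal))) Y (i + 1)) := by
    refine ext_subsingleton_of_quotient_prime (fun Q hQ ↦ h Q ?_)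
      (le_annihilator_quotSMulTop_quotient P.asIdeal x)
    refine (SetLike.lt_iff_le_and_exists (p := P.asIdeal)).2 ⟨le_sup_left.trans hQ, x, ?_, hxP⟩
    exact hQ (Ideal.mem_sup_right (Ideal.mem_span_singleton_self x))
  have bot : (⊤ : Submodule R (Abelian.Ext (ModuleCat.of R (R ⧸ P.asIdeal)) Y i)) = ⊥ := by
    refine Submodule.eq_bot_of_le_smul_of_le_jacobson_bot (Ideal.span {x}) _
      Module.Finite.fg_top (fun u _ ↦ ?_) ?_
    · obtain ⟨v, rfl⟩ := exists_smul_eq_of_subsingleton_ext_quotSMulTop reg u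
      exact Submodule.smul_mem_smul (Ideal.mem_span_singleton_self x) trivial
    · rwa [IsLocalRing.jacobson_eq_maximalIdeal _ bot_ne_top, Ideal.span_singleton_le_iff_mem]
  exact (Submodule.subsingleton_iff R).1 (subsingleton_of_bot_eq_top bot.symm)

lemma ext_quotient_prime_subsingleton_of_coheight_le (Y : ModuleCat.{u} R) [Module.Finite R Y]
    {n : ℕ} (h : ∀ i < n, Subsingleton
      (Abelian.Ext (ModuleCat.of R (R ⧸ IsLocalRing.maximalIdeal R)) Y i))
    {c : ℕ} {P : PrimeSpectrum R} (hc : Order.coheight P ≤ c) {i : ℕ} (hi : i + c < n) :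
    Subsingleton (Abelian.Ext (ModuleCat.of R (R ⧸ P.asIdeal)) Y i) := by
  by_cases hP : P.asIdeal = IsLocalRing.maximalIdeal R
  · exact hP ▸ h i (by omega)
  have lt_closedPoint : P < IsLocalRing.closedPoint R :=
    (IsLocalRing.le_maximalIdeal P.isPrime.ne_top).lt_of_ne hP
  induction c generalizing P i with
  | zero =>
    exact (lt_closedPoint.not_isMax (Order.coheight_eq_zero.1 (by simpa using hc))).elim
  | succ c ih =>
    have := ModuleCat.finite_ext R (ModuleCat.of R (R ⧸ P.asIdeal)) Y i
    refine ext_quotient_prime_subsingleton_of_forall_lt hP fun Q hPQ ↦ ?_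
    have coheight_Q : Order.coheight Q ≤ c := by
      have := (Order.coheight_add_one_le hPQ).trans hc
      simpa using this
    by_cases hQ : Q.asIdeal = IsLocalRing.maximalIdeal R
    · exact hQ ▸ h (i + 1) (by omega)
    · exact ih coheight_Q (by omega) hQ
        ((IsLocalRing.le_maximalIdeal Q.isPrime.ne_top).lt_of_ne hQ)

theorem exists_lt_nontrivial_ext_one {H : Type u} [AddCommGroup H] [Module R H]
    {P : PrimeSpectrum R} (hP : P.asIdeal ≠ IsLocalRing.maximalIdeal R)
    (hPH : P.asIdeal ∈ associatedPrimes R H)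
    (fg : (Submodule.torsionBySet R H P.asIdeal).FG) :
    ∃ Q : PrimeSpectrum R, P < Q ∧
      Nontrivial (Abelian.Ext (ModuleCat.of R (R ⧸ Q.asIdeal)) (ModuleCat.of R H) 1) := by
  by_contra! vanish
  have := finite_ext_zero_quotient fg
  have ext_zero := ext_quotient_prime_subsingleton_of_forall_lt hP vanish
  have hom_zero := (extZeroLinearEquiv R (R ⧸ P.asIdeal) H).symm.injective.subsingleton
  have := mem_associatedPrimes_hom_quotient hPH le_rfl
  rwa [associatedPrimes.eq_empty_of_subsingleton] at this

end BassLemma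

section RegularLocalRing

open IsLocalRing

lemma exists_mem_maximalIdeal_notMem_sq_notMem_minimalPrimes {R : Type*} [CommRing R]
    [IsLocalRing R] [IsNoetherianRing R] (h : 0 < ringKrullDim R) :
    ∃ x ∈ maximalIdeal R, x ∉ maximalIdeal R ^ 2 ∧ ∀ P ∈ minimalPrimes R, x ∉ P := by
  classical
  have not_minimal : maximalIdeal R ∉ minimalPrimes R := fun hm ↦ by
    rw [← maximalIdeal_height_eq_ringKrullDim, Ideal.height_eq_zero_iff.2 hm] at h
    exact h.ne rfl
  have not_le_minimal (P) (hP : P ∈ minimalPrimes R) : ¬ maximalIdeal R ≤ P := fun hle ↦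
    not_minimal ((le_maximalIdeal hP.1.1.ne_top).antisymm hle ▸ hP)
  have not_le_sq : ¬ maximalIdeal R ≤ maximalIdeal R ^ 2 := fun hle ↦ by
    have bot : maximalIdeal R = ⊥ := Submodule.eq_bot_of_le_smul_of_le_jacobson_bot _ _
      (IsNoetherian.noetherian _) (hle.trans_eq (sq _)) (jacobson_eq_maximalIdeal _ bot_ne_top).ge
    obtain ⟨P, hP⟩ := Ideal.nonempty_minimalPrimes (I := (⊥ : Ideal R)) bot_ne_top
    exact not_le_minimal P hP (bot ▸ bot_le)
  let s := insert (maximalIdeal R ^ 2) (minimalPrimes.finite_of_isNoetherianRing R).toFinset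
  have not_covered : ¬ (maximalIdeal R : Set R) ⊆ ⋃ P ∈ (s : Set (Ideal R)), (P : Set R) := by
    rw [Ideal.subset_union_prime (f := fun P ↦ P) (maximalIdeal R ^ 2) (maximalIdeal R ^ 2)]
    · simpa [s, not_le_sq] using not_le_minimal
    · intro P hP hne _
      simp only [s, Finset.mem_insert, Set.Finite.mem_toFinset] at hP
      exact (hP.resolve_left hne).1.1
  obtain ⟨x, hx, hxs⟩ := Set.not_subset.1 not_covered
  refine ⟨x, hx, ?_⟩
  simpa [s] using hxs

lemma exists_span_eq_span_insert_erase {R M : Type*} [CommRing R] [IsLocalRing R]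
    [AddCommGroup M] [Module R M] [DecidableEq M] {s : Finset M} {x : M}
    (hx : x ∈ Submodule.span R (s : Set M))
    (hx' : x ∉ maximalIdeal R • Submodule.span R (s : Set M)) :
    ∃ y ∈ s, Submodule.span R (s : Set M) = Submodule.span R (insert x (s.erase y : Finset M)) := by
  obtain ⟨c, -, rfl⟩ := Submodule.mem_span_finset.1 hx
  obtain ⟨y, hy, c_isUnit⟩ : ∃ y ∈ s, IsUnit (c y) := by
    by_contra! h
    exact hx' (sum_mem fun y hy ↦ Submodule.smul_mem_smul (h y hy) (Submodule.subset_span hy))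
  refine ⟨y, hy, le_antisymm (Submodule.span_le.2 fun a ha ↦ ?_) (Submodule.span_le.2 ?_)⟩
  · set N := Submodule.span R (insert (∑ a ∈ s, c a • a) (s.erase y : Finset M) : Set M)
    have erase_le (b) (hb : b ∈ s.erase y) : b ∈ N := Submodule.subset_span (Or.inr hb)
    have sum_mem_N : ∑ a ∈ s, c a • a ∈ N := Submodule.subset_span (Or.inl rfl)
    have y_mem : y ∈ N := by
      rw [← Finset.add_sum_erase s _ hy] at sum_mem_N
      refine (N.smul_mem_iff_of_isUnit c_isUnit).1 ((N.add_mem_iff_left ?_).1 sum_mem_N)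
      exact sum_mem fun b hb ↦ N.smul_mem _ (erase_le b hb)
    by_cases hay : a = y
    · exact Set.mem_of_eq_of_mem hay y_mem
    · exact erase_le a (Finset.mem_erase.2 ⟨hay, ha⟩)
  · exact Set.insert_subset hx
      ((Finset.coe_subset.2 (s.erase_subset y)).trans Submodule.subset_span)

lemma isLocalRing_quotient_span_singleton {R : Type*} [CommRing R] [IsLocalRing R] {x : R}
    (hx : x ∈ maximalIdeal R) : IsLocalRing (R ⧸ Ideal.span {x}) :=
  have : Nontrivial (R ⧸ Ideal.span {x}) := Ideal.Quotient.nontrivial_iff.2 fun h ↦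
    (maximalIdeal.isMaximal R).ne_top
      (top_le_iff.1 (h ▸ (Ideal.span_singleton_le_iff_mem _).2 hx))
  .of_surjective' _ Ideal.Quotient.mk_surjective

lemma spanFinrank_maximalIdeal_quotient_lt {R : Type*} [CommRing R] [IsLocalRing R]
    [IsNoetherianRing R] {x : R} [IsLocalRing (R ⧸ Ideal.span {x})]
    (hx : x ∈ maximalIdeal R) (hx' : x ∉ maximalIdeal R ^ 2) :
    (maximalIdeal (R ⧸ Ideal.span {x})).spanFinrank < (maximalIdeal R).spanFinrank := by
  classical
  obtain ⟨s, s_card, hs⟩ := Submodule.FG.exists_span_finset_card_eq_spanFinrank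
    (maximalIdeal R).fg_of_isNoetherianRing
  obtain ⟨y, hy, span_eq⟩ := exists_span_eq_span_insert_erase (hs.ge hx)
    (by rwa [hs, smul_eq_mul, ← sq])
  have mk_x : Ideal.Quotient.mk (Ideal.span {x}) x = 0 :=
    Ideal.Quotient.eq_zero_iff_mem.2 (Ideal.mem_span_singleton_self x)
  have span_image : Ideal.span (Ideal.Quotient.mk (Ideal.span {x}) '' (s.erase y : Finset R)) =
      maximalIdeal (R ⧸ Ideal.span {x}) := by
    rw [← map_maximalIdeal_of_surjective _ Ideal.Quotient.mk_surjective, ← hs, span_eq]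
    refine Eq.trans ?_ (Ideal.map_span _ _).symm
    rw [Set.image_insert_eq, mk_x]
    exact (Submodule.span_insert_zero).symm
  calc (maximalIdeal (R ⧸ Ideal.span {x})).spanFinrank
      ≤ (Ideal.Quotient.mk (Ideal.span {x}) '' (s.erase y : Finset R)).ncard :=
        span_image ▸ Submodule.spanFinrank_span_le_ncard_of_finite
          ((Finset.finite_toSet _).image _)
    _ ≤ (s.erase y).card :=
        (Set.ncard_image_le (Finset.finite_toSet _)).trans (Set.ncard_coe_finset _).le
    _ < s.card := Finset.card_erase_lt_of_mem hy
    _ = (maximalIdeal R).spanFinrank := s_card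

lemma ringKrullDim_le_ringKrullDim_quotient_add_one {R : Type*} [CommRing R] [IsLocalRing R]
    [IsNoetherianRing R] {x : R} (hx : x ∈ maximalIdeal R) :
    ringKrullDim R ≤ ringKrullDim (R ⧸ Ideal.span {x}) + 1 := by
  rw [← maximalIdeal_height_eq_ringKrullDim]
  exact Ideal.height_le_ringKrullDim_quotient_add_one hx

lemma isRegularLocalRing_quotient_span_singleton {R : Type*} [CommRing R] [IsRegularLocalRing R]
    {x : R} (hx : x ∈ maximalIdeal R) (hx' : x ∉ maximalIdeal R ^ 2) :
    IsRegularLocalRing (R ⧸ Ideal.span {x}) := by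
  have := isLocalRing_quotient_span_singleton hx
  refine .of_spanFinrank_maximalIdeal_le _ (ENat.WithBot.add_le_add_one_right_iff.1 ?_)
  calc ((maximalIdeal (R ⧸ Ideal.span {x})).spanFinrank + 1 : WithBot ℕ∞)
      ≤ (maximalIdeal R).spanFinrank := mod_cast spanFinrank_maximalIdeal_quotient_lt hx hx'
    _ = ringKrullDim R := IsRegularLocalRing.spanFinrank_maximalIdeal
    _ ≤ ringKrullDim (R ⧸ Ideal.span {x}) + 1 := ringKrullDim_le_ringKrullDim_quotient_add_one hx

lemma spanFinrank_maximalIdeal_quotient_add_one {R : Type*} [CommRing R] [IsRegularLocalRing R]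
    {x : R} [IsRegularLocalRing (R ⧸ Ideal.span {x})]
    (hx : x ∈ maximalIdeal R) (hx' : x ∉ maximalIdeal R ^ 2) :
    (maximalIdeal (R ⧸ Ideal.span {x})).spanFinrank + 1 = (maximalIdeal R).spanFinrank := by
  refine (Nat.succ_le_of_lt (spanFinrank_maximalIdeal_quotient_lt hx hx')).antisymm ?_
  have := ringKrullDim_le_ringKrullDim_quotient_add_one hx
  simp only [← IsRegularLocalRing.spanFinrank_maximalIdeal] at this
  exact_mod_cast this

lemma isDomain_of_isDomain_quotient_span_singleton {R : Type*} [CommRing R] [IsLocalRing R]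
    [IsNoetherianRing R] {x : R} (hx : x ∈ maximalIdeal R) (hx' : ∀ P ∈ minimalPrimes R, x ∉ P)
    [IsDomain (R ⧸ Ideal.span {x})] : IsDomain R := by
  have prime : (Ideal.span {x}).IsPrime := (Ideal.Quotient.isDomain_iff_prime _).1 ‹_›
  obtain ⟨P, hP, hPx⟩ := Ideal.exists_minimalPrimes_le (bot_le (a := Ideal.span {x}))
  have P_prime : P.IsPrime := hP.1.1
  have P_eq_bot : P = ⊥ := by
    refine Submodule.eq_bot_of_le_smul_of_le_jacobson_bot (Ideal.span {x}) P
      (IsNoetherian.noetherian _) (fun y hy ↦ ?_) ?_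
    · obtain ⟨z, rfl⟩ := Ideal.mem_span_singleton.1 (hPx hy)
      exact Submodule.smul_mem_smul (Ideal.mem_span_singleton_self x)
        ((P_prime.mem_or_mem hy).resolve_left (hx' P hP))
    · rwa [jacobson_eq_maximalIdeal _ bot_ne_top, Ideal.span_singleton_le_iff_mem]
  rw [P_eq_bot] at P_prime
  exact IsDomain.of_bot_isPrime R

theorem isDomain_of_isRegularLocalRing (R : Type*) [CommRing R] [IsRegularLocalRing R] :
    IsDomain R := by
  induction h : (maximalIdeal R).spanFinrank generalizing R with
  | zero =>
    rw [Submodule.spanFinrank_eq_zero_iff_eq_bot (IsNoetherian.noetherian _)] at h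
    exact (isField_iff_maximalIdeal_eq.2 h).isDomain
  | succ n ih =>
    obtain ⟨x, hx, hx', hx_min⟩ :=
      exists_mem_maximalIdeal_notMem_sq_notMem_minimalPrimes (R := R) (by
        rw [← IsRegularLocalRing.spanFinrank_maximalIdeal, h]
        exact_mod_cast n.succ_pos)
    have := isRegularLocalRing_quotient_span_singleton hx hx'
    have := ih (R ⧸ Ideal.span {x}) (by
      have := spanFinrank_maximalIdeal_quotient_add_one hx hx'
      omega)
    exact isDomain_of_isDomain_quotient_span_singleton hx hx_min

theorem exists_isRegular_length_eq_spanFinrank (R : Type*) [CommRing R] [IsRegularLocalRing R] :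
    ∃ rs : List R, rs.length = (maximalIdeal R).spanFinrank ∧ (∀ r ∈ rs, r ∈ maximalIdeal R) ∧
      IsRegular R rs := by
  induction h : (maximalIdeal R).spanFinrank generalizing R with
  | zero => exact ⟨[], rfl, by simp, .nil R R⟩
  | succ n ih =>
    obtain ⟨x, hx, hx', -⟩ :=
      exists_mem_maximalIdeal_notMem_sq_notMem_minimalPrimes (R := R) (by
        rw [← IsRegularLocalRing.spanFinrank_maximalIdeal, h]
        exact_mod_cast n.succ_pos)
    have := isDomain_of_isRegularLocalRing R
    have := isRegularLocalRing_quotient_span_singleton hx hx'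
    obtain ⟨rs, length_eq, mem, reg⟩ := ih (R ⧸ Ideal.span {x}) (by
      have := spanFinrank_maximalIdeal_quotient_add_one hx hx'
      omega)
    obtain ⟨rs, rfl⟩ := List.map_surjective_iff.2 Ideal.Quotient.mk_surjective rs
    have mem_cons : ∀ r ∈ x :: rs, r ∈ maximalIdeal R := by
      refine List.forall_mem_cons.2 ⟨hx, fun r hr ↦ ?_⟩
      have := mem _ (List.mem_map_of_mem hr)
      exact fun h ↦ this (h.map _)
    have x_ne_zero : x ≠ 0 := fun h ↦ hx' (h ▸ zero_mem _)
    refine ⟨x :: rs, by simpa using length_eq, mem_cons,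
      (isRegular_iff_isWeaklyRegular_of_subset_maximalIdeal mem_cons).2
        ((isWeaklyRegular_cons_iff R x rs).2 ⟨.of_ne_zero x_ne_zero, ?_⟩)⟩
    let e : (R ⧸ Ideal.span {x}) ≃ₗ[R] QuotSMulTop x R := Submodule.quotEquivOfEq _ _ (by
      rw [← Submodule.ideal_span_singleton_smul, smul_eq_mul, Ideal.mul_top])
    exact (e.isWeaklyRegular_congr rs).1
      ((isWeaklyRegular_map_algebraMap_iff (R ⧸ Ideal.span {x}) _ rs).1 reg.1)

end RegularLocalRing

section GradeEqHeight

variable {R : Type u} [CommRing R]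

lemma height_add_coheight_le_ringKrullDim (P : PrimeSpectrum R) :
    ((Order.height P + Order.coheight P : ℕ∞) : WithBot ℕ∞) ≤ ringKrullDim R := by
  have : Nonempty (PrimeSpectrum R) := ⟨P⟩
  rw [ringKrullDim, Order.krullDim_eq_iSup_height_add_coheight_of_nonempty]
  exact WithBot.coe_le_coe.2 (le_iSup (fun a ↦ Order.height a + Order.coheight a) P)

lemma support_quotient (I : Ideal R) :
    Module.support R (R ⧸ I) = PrimeSpectrum.zeroLocus (I : Set R) := by
  rw [Module.support_eq_zeroLocus, Ideal.annihilator_quotient]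

variable [IsNoetherianRing R]

lemma length_le_height {rs : List R} {P : Ideal R} [P.IsPrime] (reg : IsWeaklyRegular R rs)
    (mem : ∀ r ∈ rs, r ∈ P) : (rs.length : ℕ∞) ≤ P.height := by
  let A := Localization.AtPrime P
  have regA := reg.isRegular_of_isLocalization_of_mem A P mem
  have hdim := ringKrullDim_add_length_eq_ringKrullDim_of_isRegular _ regA
  rw [IsLocalization.AtPrime.ringKrullDim_eq_height P A, List.length_map] at hdim
  have : Nontrivial (A ⧸ Ideal.ofList (rs.map (algebraMap R A))) :=
    Ideal.Quotient.nontrivial_iff.2 fun htop ↦ regA.top_ne_smul (by simp [htop])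
  have hle : ((rs.length : ℕ∞) : WithBot ℕ∞) ≤ P.height :=
    hdim ▸ le_add_of_nonneg_left ringKrullDim_nonneg_of_nontrivial
  exact WithBot.coe_le_coe.1 hle

lemma mem_associatedPrimes_quotient_ofList {rs : List R} {P : Ideal R} [P.IsPrime]
    (reg : IsWeaklyRegular R rs) (mem : ∀ r ∈ rs, r ∈ P) (hP : P.height ≤ rs.length) :
    P ∈ associatedPrimes R (R ⧸ Ideal.ofList rs) := by
  have : P.FiniteHeight := Ideal.finiteHeight_of_isNoetherianRing P
  have hmin : P ∈ (Ideal.ofList rs).minimalPrimes := by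
    refine Ideal.mem_minimalPrimes_of_height_le (Ideal.span_le.2 mem) (hP.trans ?_)
    rw [Ideal.height_eq_inf_minimalPrimes]
    refine le_iInf₂ fun Q hQ ↦ ?_
    have := hQ.1.1
    exact length_le_height reg fun r hr ↦ hQ.1.2 (Ideal.subset_span hr)
  exact Module.associatedPrimes.minimalPrimes_annihilator_subset_associatedPrimes R
    (R ⧸ Ideal.ofList rs) (by rwa [Ideal.annihilator_quotient])

variable [IsLocalRing R]

theorem exists_isRegular_length_eq_height {rs : List R} (reg : IsRegular R rs)
    (mem : ∀ r ∈ rs, r ∈ IsLocalRing.maximalIdeal R) (hdim : ringKrullDim R ≤ rs.length)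
    (P : Ideal R) [hP : P.IsPrime] :
    ∃ xs : List R, (xs.length : ℕ∞) = P.height ∧ (∀ x ∈ xs, x ∈ P) ∧ IsRegular R xs := by
  let P' : PrimeSpectrum R := ⟨P, hP⟩
  have hsum : P.height + Order.coheight P' ≤ rs.length := by
    have h := (height_add_coheight_le_ringKrullDim P').trans hdim
    rw [← PrimeSpectrum.height_eq_orderHeight] at h
    exact_mod_cast h
  obtain ⟨d, hd⟩ := ENat.ne_top_iff_exists.1 fun h : P.height = ⊤ => by simp [h] at hsum
  obtain ⟨c, hc⟩ := ENat.ne_top_iff_exists.1 fun h : Order.coheight P' = ⊤ => by simp [h] at hsum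
  rw [← hd, ← hc] at hsum
  norm_cast at hsum
  have smul_lt (I : Ideal R) (hI : I ≠ ⊤) : I • (⊤ : Submodule R (ModuleCat.of R R)) < ⊤ := by
    change I • (⊤ : Ideal R) < ⊤
    simpa only [smul_eq_mul, Ideal.mul_top] using hI.lt_top
  have hk (i : ℕ) (hi : i < rs.length) : Subsingleton (Abelian.Ext
      (ModuleCat.of R (R ⧸ IsLocalRing.maximalIdeal R)) (ModuleCat.of R R) i) :=
    ModuleCat.subsingleton_ext_of_exists_isRegular _ _ (support_quotient _).subset _
      (smul_lt _ Ideal.IsPrime.ne_top') rs mem reg i hi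
  obtain ⟨xs, hlen, hxs, hreg⟩ := ModuleCat.exists_isRegular_of_exists_subsingleton_ext P d
    (ModuleCat.of R R) (smul_lt P hP.ne_top) (ModuleCat.of R (R ⧸ P)) (support_quotient P)
    fun i hi ↦ ext_quotient_prime_subsingleton_of_coheight_le (P := P') _ hk hc.ge (by omega)
  exact ⟨xs, by rw [hlen, hd], hxs, hreg⟩

end GradeEqHeight

section Localization

section

variable {R R' M M' : Type*} [CommRing R] [CommRing R'] [Algebra R R'] (S : Submonoid R)
  [IsLocalization S R'] [AddCommGroup M] [Module R M] [AddCommGroup M'] [Module R M'] [Module R' M']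
  [IsScalarTower R R' M'] (f : M →ₗ[R] M') [IsLocalizedModule S f] {I : Ideal R}

lemma torsionBySet_map_le_localized' (hI : I.FG) :
    Submodule.torsionBySet R' M' (I.map (algebraMap R R')) ≤
      (Submodule.torsionBySet R M I).localized' R' S f := by
  intro x hx
  obtain ⟨⟨m, s⟩, rfl⟩ := IsLocalizedModule.mk'_surjective S f x
  rw [Submodule.mem_torsionBySet_iff] at hx
  have : Module.Finite R I := Module.Finite.iff_fg.2 hI
  let g : I →ₗ[R] M := (LinearMap.toSpanSingleton R M m).comp I.subtype
  have hg : f ∘ₗ g = f ∘ₗ 0 := by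
    ext a
    have ha := hx ⟨_, Ideal.mem_map_of_mem _ a.2⟩
    rw [algebraMap_smul, Function.uncurry_apply_pair, ← IsLocalizedModule.mk'_smul,
      IsLocalizedModule.mk'_eq_zero] at ha
    simpa [g] using ha
  obtain ⟨u, hu⟩ := Module.Finite.exists_smul_of_comp_eq_of_isLocalizedModule S f g 0 hg
  refine ⟨u • m, ?_, u * s, IsLocalizedModule.mk'_cancel_left f m u s⟩
  rw [Submodule.mem_torsionBySet_iff]
  intro a
  rw [smul_comm]
  simpa [g] using LinearMap.congr_fun hu a

include S f in
lemma fg_torsionBySet_map [IsNoetherianRing R'] (hI : I.FG)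
    (fg : (Submodule.torsionBySet R M I).FG) :
    (Submodule.torsionBySet R' M' (I.map (algebraMap R R'))).FG := by
  obtain ⟨T, hT⟩ := fg
  refine Submodule.FG.of_le ?_ (torsionBySet_map_le_localized' S f hI)
  rw [← hT, Submodule.localized'_span]
  exact Submodule.fg_span (T.finite_toSet.image f)

end

variable {R : Type u} [CommRing R] {p q : Ideal R} [hp : p.IsPrime] [hq : q.IsPrime]

section

variable {M M' : Type*} [AddCommGroup M] [Module R M] [AddCommGroup M'] [Module R M']
  [Module (Localization.AtPrime q) M'] [IsScalarTower R (Localization.AtPrime q) M']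
  (f : M →ₗ[R] M') [IsLocalizedModule q.primeCompl f]

include f in
lemma map_mem_associatedPrimes_of_le (hpq : p ≤ q) (hpM : p ∈ associatedPrimes R M) :
    p.map (algebraMap R (Localization.AtPrime q)) ∈
      associatedPrimes (Localization.AtPrime q) M' := by
  apply
    Module.associatedPrimes.mem_associatedPrimes_of_comap_mem_associatedPrimes_of_isLocalizedModule
      q.primeCompl f
  rwa [← Ideal.under_def, Ideal.under_map_of_isLocalizationAtPrime q hpq]

end

lemma eq_maximalIdeal_of_covBy (hpq : (⟨p, hp⟩ : PrimeSpectrum R) ⋖ ⟨q, hq⟩)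
    {Q : Ideal (Localization.AtPrime q)} [hQ : Q.IsPrime]
    (hlt : p.map (algebraMap R (Localization.AtPrime q)) < Q) :
    Q = IsLocalRing.maximalIdeal (Localization.AtPrime q) := by
  have hpQ : p < Q.under R := by
    refine lt_of_le_of_ne (Ideal.map_le_iff_le_comap.1 hlt.le) fun h ↦ hlt.ne ?_
    rw [h, IsLocalization.map_under q.primeCompl]
  have hQq : Q.under R ≤ q :=
    (Ideal.comap_mono (IsLocalRing.le_maximalIdeal hQ.ne_top)).trans
      Localization.AtPrime.under_maximalIdeal.le
  rw [← Localization.AtPrime.eq_maximalIdeal_iff_under_eq]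
  by_contra hne
  exact hpq.2 (c := ⟨Q.under R, inferInstance⟩) hpQ (hQq.lt_of_ne hne)

theorem nontrivial_ext_residueField_of_covBy [IsNoetherianRing R]
    (hpq : (⟨p, hp⟩ : PrimeSpectrum R) ⋖ ⟨q, hq⟩) {H : Type u} [AddCommGroup H]
    [Module (Localization.AtPrime q) H]
    (hpH : p.map (algebraMap R (Localization.AtPrime q)) ∈
      associatedPrimes (Localization.AtPrime q) H)
    (fg : (Submodule.torsionBySet (Localization.AtPrime q) H
      (p.map (algebraMap R (Localization.AtPrime q)))).FG) :
    Nontrivial (Abelian.Ext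
      (ModuleCat.of (Localization.AtPrime q) (IsLocalRing.ResidueField (Localization.AtPrime q)))
      (ModuleCat.of (Localization.AtPrime q) H) 1) := by
  let A := Localization.AtPrime q
  have : IsNoetherianRing A := IsLocalization.isNoetherianRing q.primeCompl A inferInstance
  have hne : p.map (algebraMap R A) ≠ IsLocalRing.maximalIdeal A := by
    intro h
    have hpq' := Ideal.under_map_of_isLocalizationAtPrime (S := A) q hpq.le
    rw [h, Localization.AtPrime.under_maximalIdeal] at hpq'
    exact hpq.ne (PrimeSpectrum.ext hpq'.symm)
  obtain ⟨Q, hlt, hQ⟩ := exists_lt_nontrivial_ext_one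
    (P := ⟨_, Ideal.isPrime_map_of_isLocalizationAtPrime q hpq.le⟩) hne hpH fg
  rwa [eq_maximalIdeal_of_covBy hpq hlt] at hQ

end Localization

section BassNumber

variable {R : Type u} [CommRing R] {p q : Ideal R} [hp : p.IsPrime] [hq : q.IsPrime] {rs : List R}

section

variable [IsNoetherianRing R]

lemma fg_torsionBySet_localCohomology_self (mem : ∀ r ∈ rs, r ∈ p) (reg : IsRegular R rs) :
    (Submodule.torsionBySet R ((localCohomology p rs.length).obj (ModuleCat.of R R)) p).FG :=
  fg_torsionBySet_localCohomology (M := ModuleCat.of R R) (I := p)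
    (by simpa only [smul_eq_mul, Ideal.mul_top] using hp.ne_top) mem reg

lemma mem_associatedPrimes_localCohomology_self (mem : ∀ r ∈ rs, r ∈ p) (reg : IsRegular R rs)
    (ass : p ∈ associatedPrimes R (R ⧸ Ideal.ofList rs)) :
    p ∈ associatedPrimes R ((localCohomology p rs.length).obj (ModuleCat.of R R)) :=
  mem_associatedPrimes_localCohomology (M := ModuleCat.of R R) (I := p)
    (by simpa only [smul_eq_mul, Ideal.mul_top] using hp.ne_top) mem reg le_rfl
    (by rwa [smul_eq_mul, Ideal.mul_top])

theorem nontrivial_ext_residueField_localizedModule_localCohomology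
    (hpq : (⟨p, hp⟩ : PrimeSpectrum R) ⋖ ⟨q, hq⟩) (mem : ∀ r ∈ rs, r ∈ p) (reg : IsRegular R rs)
    (ass : p ∈ associatedPrimes R (R ⧸ Ideal.ofList rs)) :
    Nontrivial (Abelian.Ext
      (ModuleCat.of (Localization.AtPrime q) (IsLocalRing.ResidueField (Localization.AtPrime q)))
      (ModuleCat.of (Localization.AtPrime q) (LocalizedModule q.primeCompl
        ((localCohomology p rs.length).obj (ModuleCat.of R R)))) 1) :=
  let toLocalization := LocalizedModule.mkLinearMap q.primeCompl
    ((localCohomology p rs.length).obj (ModuleCat.of R R))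
  nontrivial_ext_residueField_of_covBy hpq
    (map_mem_associatedPrimes_of_le toLocalization hpq.le
      (mem_associatedPrimes_localCohomology_self mem reg ass))
    (fg_torsionBySet_map q.primeCompl toLocalization (IsNoetherian.noetherian p)
      (fg_torsionBySet_localCohomology_self mem reg))

end

lemma map_mem_associatedPrimes_quotient_map {I : Ideal R} (hpq : p ≤ q)
    (ass : p ∈ associatedPrimes R (R ⧸ I)) :
    p.map (algebraMap R (Localization.AtPrime q)) ∈ associatedPrimes (Localization.AtPrime q)
      (Localization.AtPrime q ⧸ I.map (algebraMap R (Localization.AtPrime q))) := by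
  rw [← Ideal.localized'_eq_map _ q.primeCompl]
  exact map_mem_associatedPrimes_of_le (Submodule.toLocalizedQuotient' _ q.primeCompl
    (Algebra.linearMap R (Localization.AtPrime q)) I) hpq ass

theorem not_injective_localCohomology_localization [IsNoetherianRing R]
    (hpq : (⟨p, hp⟩ : PrimeSpectrum R) ⋖ ⟨q, hq⟩) (mem : ∀ r ∈ rs, r ∈ p) (reg : IsRegular R rs)
    (ass : p ∈ associatedPrimes R (R ⧸ Ideal.ofList rs)) :
    ¬ Module.Injective (Localization.AtPrime q)
      ((localCohomology (p.map (algebraMap R (Localization.AtPrime q))) rs.length).obj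
        (ModuleCat.of (Localization.AtPrime q) (Localization.AtPrime q))) := by
  let A := Localization.AtPrime q
  have : IsNoetherianRing A := IsLocalization.isNoetherianRing q.primeCompl A inferInstance
  have : (p.map (algebraMap R A)).IsPrime := Ideal.isPrime_map_of_isLocalizationAtPrime q hpq.le
  have memA : ∀ x ∈ rs.map (algebraMap R A), x ∈ p.map (algebraMap R A) :=
    List.forall_mem_map.2 fun r hr ↦ Ideal.mem_map_of_mem _ (mem r hr)
  have regA : IsRegular A (rs.map (algebraMap R A)) :=
    reg.1.isRegular_of_isLocalization_of_mem A q fun r hr ↦ hpq.le (mem r hr)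
  have assA : p.map (algebraMap R A) ∈
      associatedPrimes A (A ⧸ Ideal.ofList (rs.map (algebraMap R A))) := by
    rw [← Ideal.map_ofList]
    exact map_mem_associatedPrimes_quotient_map hpq.le ass
  rw [← List.length_map (algebraMap R A)]
  intro hinj
  have := Module.injective_object_of_injective_module A
    ((localCohomology (p.map (algebraMap R A)) (rs.map (algebraMap R A)).length).obj
      (ModuleCat.of A A))
  have nontrivial_ext := nontrivial_ext_residueField_of_covBy hpq
    (mem_associatedPrimes_localCohomology_self memA regA assA)
    (fg_torsionBySet_localCohomology_self memA regA)
  exact not_nontrivial_iff_subsingleton.2 (Abelian.Ext.subsingleton_of_injective _ _ 0)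
    nontrivial_ext

end BassNumber

theorem stmt10_general {R : Type} [CommRing R] [IsNoetherianRing R] {p q : Ideal R}
    [hp : p.IsPrime] [hq : q.IsPrime] (hpq : (⟨p, hp⟩ : PrimeSpectrum R) ⋖ ⟨q, hq⟩)
    {rs : List R} (mem : ∀ r ∈ rs, r ∈ p) (reg : IsRegular R rs)
    (ass : p ∈ associatedPrimes R (R ⧸ Ideal.ofList rs)) :
    ¬ Module.Injective (Localization.AtPrime q)
        (LocalCohomologyMod (Localization.AtPrime q)
          (p.map (algebraMap R (Localization.AtPrime q))) rs.length) ∧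
      BassNumberNonzero R q (LocalCohomologyMod R p rs.length) 1 :=
  have := nontrivial_ext_residueField_localizedModule_localCohomology hpq mem reg ass
  ⟨not_injective_localCohomology_localization hpq mem reg ass,
    (extLinearEquiv _ _ _ 1).toEquiv.nontrivial⟩

section RegularLocal

variable {R : Type} [CommRing R]

lemma idealHeight_eq_height (p : Ideal R) [hp : p.IsPrime] : idealHeight R p = p.height := by
  have height_eq := PrimeSpectrum.height_eq_orderHeight (⟨p, hp⟩ : PrimeSpectrum R)
  refine le_antisymm (sInf_le ⟨⟨p, hp⟩, le_rfl, height_eq.symm⟩) (le_sInf ?_)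
  rintro _ ⟨P, hP, rfl⟩
  exact height_eq.trans_le (Order.height_mono hP)

lemma covBy_of_idealHeight_eq_add_one [IsNoetherianRing R] {p q : Ideal R} [hp : p.IsPrime]
    [hq : q.IsPrime] (hpq : p ≤ q) (h : idealHeight R q = idealHeight R p + 1) :
    (⟨p, hp⟩ : PrimeSpectrum R) ⋖ ⟨q, hq⟩ := by
  rw [idealHeight_eq_height, idealHeight_eq_height] at h
  have finite (P : PrimeSpectrum R) := Ideal.finiteHeight_of_isNoetherianRing P.asIdeal
  constructor
  · refine lt_of_le_of_ne hpq fun hpq_eq ↦ ?_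
    obtain rfl : p = q := congrArg PrimeSpectrum.asIdeal hpq_eq
    exact ((ENat.lt_add_one_iff (Ideal.height_ne_top hp.ne_top)).2 le_rfl).ne h
  · intro Q hpQ hQq
    have lt_height_Q := Ideal.height_strict_mono_of_isPrime_of_isPrime hpQ
    have height_Q_lt := Ideal.height_strict_mono_of_isPrime_of_isPrime hQq
    exact (Order.add_one_le_of_lt lt_height_Q).not_gt (h ▸ height_Q_lt)

lemma IsRegularLocal.isRegularLocalRing [IsLocalRing R] (h : IsRegularLocal R) :
    IsRegularLocalRing R := by
  obtain ⟨_, s, hs, hcard⟩ := h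
  refine IsRegularLocalRing.of_spanFinrank_maximalIdeal_le R ?_
  rw [← hs, ← hcard]
  have := Submodule.spanFinrank_span_le_ncard_of_finite (R := R) s.finite_toSet
  rw [Set.ncard_coe_finset] at this
  exact_mod_cast this

theorem IsRegularLocal.exists_isRegular_mem_associatedPrimes [IsLocalRing R]
    (h : IsRegularLocal R) (p : Ideal R) [p.IsPrime] :
    ∃ rs : List R, (rs.length : ℕ∞) = idealHeight R p ∧ (∀ r ∈ rs, r ∈ p) ∧ IsRegular R rs ∧
      p ∈ associatedPrimes R (R ⧸ Ideal.ofList rs) := by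
  have := h.isRegularLocalRing
  obtain ⟨xs, length_eq, xs_mem, xs_reg⟩ := exists_isRegular_length_eq_spanFinrank R
  obtain ⟨rs, length_eq_height, mem, reg⟩ := exists_isRegular_length_eq_height xs_reg xs_mem
    (by rw [length_eq, IsRegularLocalRing.spanFinrank_maximalIdeal]) p
  exact ⟨rs, length_eq_height.trans (idealHeight_eq_height p).symm, mem, reg,
    mem_associatedPrimes_quotient_ofList reg.1 mem length_eq_height.ge⟩

end RegularLocal

/-- Regular local ring `R` of dimension `n` containing a field,
primes `p ⊆ q` with `ht p = n-2`, `ht q = n-1`.  Then `H_{pR_q}^{n-2}(R_q)` is not an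
injective `R_q`-module; equivalently `μ^1(q, H_p^{n-2}(R)) ≠ 0`. -/
theorem stmt10 (R : Type) [CommRing R] [IsLocalRing R]
    (hreg : IsRegularLocal R) (hfield : ContainsField R)
    (n : ℕ) (hdim : ringKrullDim R = (n : WithBot ℕ∞))
    (p q : Ideal R) [p.IsPrime] [q.IsPrime] (hpq : p ≤ q)
    (hp : idealHeight R p + 2 = (n : ℕ∞))
    (hq : idealHeight R q + 1 = (n : ℕ∞)) :
    ¬ Module.Injective (Localization.AtPrime q)
        (LocalCohomologyMod (Localization.AtPrime q)
          (p.map (algebraMap R (Localization.AtPrime q))) (n - 2)) ∧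
      BassNumberNonzero R q (LocalCohomologyMod R p (n - 2)) 1 := by
  have : IsNoetherianRing R := hreg.1
  obtain ⟨rs, length_eq, mem, reg, ass⟩ := hreg.exists_isRegular_mem_associatedPrimes p
  obtain rfl : rs.length + 2 = n := by exact_mod_cast length_eq ▸ hp
  have height_q : idealHeight R q = idealHeight R p + 1 :=
    ENat.add_left_injective_of_ne_top ENat.one_ne_top (length_eq ▸ hq)
  exact stmt10_general (covBy_of_idealHeight_eq_add_one hpq height_q) mem reg ass
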